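/- For all reals l ≥ 0, γ > l + 2, and K₁ > 0, there exists a constant C > 0 such that: for every D > 0, S > 0, every ω : ℤ²_* → ℂ with |ω|_{∞,γ} ≤ D and ‖ω‖ ≤ S, and every σ : ℤ²_* → ℂ with |σ_k| ≥ K₁ / |k|^l for all k, the series ∑_{k ∈ ℤ²_*} |F_k(ω)|² / |σ_k|² converges and is at most C · S² · D². -/

import Mathlib

/-!
Write `j = k - ℓ` and `q = γ - l > 2`. Since `ℓ^⊥ · k = ℓ^⊥ · j`, the coefficient of `ω_ℓ ω_j` in
`F_k` is at most `|j| / |ℓ|` up to a constant, and `|k|^l ≤ 2^l max(|j|, |ℓ|)^l`.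
* If `|j| ≥ |ℓ|`, using `|ω_j| ≤ D |j|^{-γ}` the interaction is at most
  `2^l D |j|^{1-q} |ℓ|^{-1} |ω_ℓ| ≤ 2^l D |j|^{-q/2} |ℓ|^{-q/2} |ω_ℓ|`, because `q/2 > 1`.
* If `|j| ≤ |ℓ|`, using `|ω_ℓ| ≤ D |ℓ|^{-γ}` it is at most `2^l D |ℓ|^{-q} |ω_j|`.

This is `pointwise_bound`, transferred to the terms of the series in `norm_Fterm_le`. With
`u = |·|^{-q/2}`, whose square is summable over `ℤ²` because `q > 2` (`summable_weight`), it remains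
to bound in `ℓ²` the sums `∑_ℓ u(k-ℓ) u(ℓ) |ω_ℓ|` and `∑_ℓ u(ℓ)² |ω_{k-ℓ}|`. By Cauchy–Schwarz the
square of either is at most `∑ u²` times a convolution of `u²` with `|ω|²`, and summing over `k`
gives `(∑ u²)² ‖ω‖²` (`bilinear_bound`). These estimates are carried out in `[0, ∞]`, where sums may
be exchanged freely; finiteness at the end yields the convergence (`summable_and_tsum_le`).
-/

open scoped Classical

/-- `ℤ²_* = ℤ² ∖ {0}`. -/
abbrev Zstar : Type := {k : ℤ × ℤ // k ≠ 0}

/-- Euclidean norm of a lattice point. -/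
noncomputable def znorm (a : ℤ × ℤ) : ℝ := Real.sqrt ((a.1 : ℝ) ^ 2 + (a.2 : ℝ) ^ 2)

/-- `a^⊥ = (−a₂, a₁)`. -/
def zperp (a : ℤ × ℤ) : ℤ × ℤ := (-a.2, a.1)

/-- Dot product of lattice points. -/
def zdot (a b : ℤ × ℤ) : ℤ := a.1 * b.1 + a.2 * b.2

/-- Extension of a function on `ℤ²_*` to `ℤ²` by zero. -/
noncomputable def zext (ω : Zstar → ℂ) : ℤ × ℤ → ℂ :=
  fun k => if h : k ≠ 0 then ω ⟨k, h⟩ else 0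

/-- The `ℓ`-th term of the series defining the Navier–Stokes nonlinearity `F_k(ω)`. -/
noncomputable def Fterm (ω : Zstar → ℂ) (k : Zstar) (ℓ : ℤ × ℤ) : ℂ :=
  (((zdot (zperp ℓ) k.1 : ℝ) / (znorm ℓ) ^ 2 : ℝ) : ℂ) * zext ω ℓ * zext ω (k.1 - ℓ)

/-- The Navier–Stokes nonlinearity `F_k(ω) = 2i ∑_{j+ℓ=k} ((ℓ^⊥·k)/|ℓ|²) ω_ℓ ω_j`. -/
noncomputable def Fns (ω : Zstar → ℂ) (k : Zstar) : ℂ :=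
  2 * Complex.I * ∑' ℓ : ℤ × ℤ, Fterm ω k ℓ

open scoped ENNReal

/-! ### Quadratic bounds for convolution sums in `[0, ∞]` -/

/-- Cauchy–Schwarz for series in `[0, ∞]`, read off from Hölder's inequality for the counting
measure. -/
lemma cs_tsum {ι : Type*} (f g : ι → ℝ≥0∞) :
    (∑' i, f i * g i) ^ 2 ≤ (∑' i, f i ^ 2) * ∑' i, g i ^ 2 := by
  let _ : MeasurableSpace ι := ⊤
  have h := ENNReal.lintegral_mul_le_Lp_mul_Lq (MeasureTheory.Measure.count : MeasureTheory.Measure ι)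
    Real.HolderConjugate.two_two (f := f) (g := g) measurable_from_top.aemeasurable
    measurable_from_top.aemeasurable
  simp only [MeasureTheory.lintegral_count, Pi.mul_apply, ENNReal.rpow_two] at h
  have h2 := pow_le_pow_left' h 2
  rw [mul_pow, ← ENNReal.rpow_natCast, ← ENNReal.rpow_natCast, ← ENNReal.rpow_natCast,
    ← ENNReal.rpow_mul, ← ENNReal.rpow_mul] at h2
  simpa using h2

lemma add_sq_le_two (a b : ℝ≥0∞) : (a + b) ^ 2 ≤ 2 * (a ^ 2 + b ^ 2) := by
  rcases eq_or_ne a ∞ with rfl | ha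
  · simp
  rcases eq_or_ne b ∞ with rfl | hb
  · simp
  lift a to NNReal using ha
  lift b to NNReal using hb
  norm_cast
  exact add_sq_le

/-- Both convolution-type sums are controlled in `ℓ²` by `(∑ u²) · (∑ v²)^{1/2}`: Cauchy–Schwarz
in `ℓ` pulls out one factor `∑ u²`, and the remaining double sum factors by translation
invariance. -/
lemma bilinear_bound (u v : ℤ × ℤ → ℝ≥0∞) :
    ∑' k : ℤ × ℤ, (∑' ℓ : ℤ × ℤ, (u (k - ℓ) * u ℓ * v ℓ + u ℓ ^ 2 * v (k - ℓ))) ^ 2 ≤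
      4 * (∑' m, u m ^ 2) ^ 2 * ∑' m, v m ^ 2 := by
  set W := ∑' m, u m ^ 2 with hW
  set V := ∑' m, v m ^ 2 with hV
  have h1 : ∑' k : ℤ × ℤ, (∑' ℓ : ℤ × ℤ, u (k - ℓ) * u ℓ * v ℓ) ^ 2 ≤ W * (W * V) := by
    calc _ ≤ ∑' k : ℤ × ℤ, W * ∑' ℓ : ℤ × ℤ, u (k - ℓ) ^ 2 * v ℓ ^ 2 := by
          refine ENNReal.tsum_le_tsum fun k => ?_
          have := cs_tsum u (fun ℓ => u (k - ℓ) * v ℓ)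
          simp only [mul_pow] at this
          refine le_trans (le_of_eq ?_) this
          congr 2 with ℓ
          ring
      _ = W * (W * V) := by
          rw [ENNReal.tsum_mul_left, ENNReal.tsum_comm]
          congr 1
          simp_rw [ENNReal.tsum_mul_right]
          rw [hV, ← ENNReal.tsum_mul_left]
          refine tsum_congr fun ℓ => ?_
          congr 1
          exact (Equiv.subRight ℓ).tsum_eq (fun m => u m ^ 2)
  have h2 : ∑' k : ℤ × ℤ, (∑' ℓ : ℤ × ℤ, u ℓ ^ 2 * v (k - ℓ)) ^ 2 ≤ W * (W * V) := by
    calc _ ≤ ∑' k : ℤ × ℤ, W * ∑' ℓ : ℤ × ℤ, u ℓ ^ 2 * v (k - ℓ) ^ 2 := by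
          refine ENNReal.tsum_le_tsum fun k => ?_
          have := cs_tsum u (fun ℓ => u ℓ * v (k - ℓ))
          simp only [mul_pow] at this
          refine le_trans (le_of_eq ?_) this
          congr 2 with ℓ
          ring
      _ = W * (W * V) := by
          rw [ENNReal.tsum_mul_left, ENNReal.tsum_comm]
          congr 1
          simp_rw [ENNReal.tsum_mul_left]
          rw [hW, ← ENNReal.tsum_mul_right]
          refine tsum_congr fun ℓ => ?_
          congr 1
          exact (Equiv.subRight ℓ).tsum_eq (fun m => v m ^ 2)
  calc _ ≤ ∑' k : ℤ × ℤ, 2 * ((∑' ℓ : ℤ × ℤ, u (k - ℓ) * u ℓ * v ℓ) ^ 2 +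
        (∑' ℓ : ℤ × ℤ, u ℓ ^ 2 * v (k - ℓ)) ^ 2) := by
        refine ENNReal.tsum_le_tsum fun k => ?_
        rw [ENNReal.tsum_add]
        exact add_sq_le_two _ _
    _ ≤ 2 * (W * (W * V) + W * (W * V)) := by
        rw [ENNReal.tsum_mul_left, ENNReal.tsum_add]
        gcongr
    _ = 4 * W ^ 2 * V := by ring

/-! ### A single interaction -/

/-- The estimate of a single interaction, with `a = |ℓ|`, `b = |j|`, `c = |k|`, `x = |ω_ℓ|`,
`y = |ω_j|`. The decay hypothesis is spent on the mode with the larger wave number only, so that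
the other factor is still available in `ℓ²`. -/
lemma pointwise_bound {l γ a b c x y D : ℝ} (hl : 0 ≤ l) (hγ : l + 2 < γ) (ha : 1 ≤ a) (hb : 1 ≤ b)
    (hc : 0 ≤ c) (hcab : c ≤ a + b) (hx : 0 ≤ x) (hy : 0 ≤ y)
    (hax : a ^ γ * x ≤ D) (hby : b ^ γ * y ≤ D) :
    c ^ l * (b / a * x * y) ≤
      2 ^ l * D * (b ^ (-((γ - l) / 2)) * a ^ (-((γ - l) / 2)) * x +
        (a ^ (-((γ - l) / 2))) ^ 2 * y) := by
  have ha0 : 0 < a := by linarith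
  have hb0 : 0 < b := by linarith
  have hD : 0 ≤ D := le_trans (by positivity) hax
  have hxD : x ≤ D * a ^ (-γ) := by
    rw [Real.rpow_neg ha0.le, ← div_eq_mul_inv, le_div_iff₀ (by positivity)]; linarith
  have hyD : y ≤ D * b ^ (-γ) := by
    rw [Real.rpow_neg hb0.le, ← div_eq_mul_inv, le_div_iff₀ (by positivity)]; linarith
  rcases le_total a b with h | h
  -- Since `(γ - l) / 2 > 1`, the power `1 - (γ - l) / 2` is negative and `b` can be traded for `a`.
  · have h1 : c ^ l ≤ 2 ^ l * b ^ l := by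
      rw [← Real.mul_rpow (by norm_num) hb0.le]
      exact Real.rpow_le_rpow hc (by linarith) hl
    have h2 : b ^ l * (b / a) * b ^ (-γ) ≤ b ^ (-((γ - l) / 2)) * a ^ (-((γ - l) / 2)) := by
      have e1 : b ^ l * (b / a) * b ^ (-γ) =
          b ^ (-((γ - l) / 2)) * (b ^ (1 - (γ - l) / 2) * a⁻¹) := by
        have : b ^ l * b * b ^ (-γ) = b ^ (-((γ - l) / 2)) * b ^ (1 - (γ - l) / 2) := by
          rw [← Real.rpow_add_one hb0.ne', ← Real.rpow_add hb0, ← Real.rpow_add hb0]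
          congr 1; ring
        rw [← mul_assoc, ← this]; ring
      have e2 : a ^ (-((γ - l) / 2)) = a ^ (1 - (γ - l) / 2) * a⁻¹ := by
        rw [← Real.rpow_neg_one, ← Real.rpow_add ha0]; congr 1; ring
      rw [e1, e2]
      have := Real.rpow_le_rpow_of_nonpos ha0 h (show 1 - (γ - l) / 2 ≤ 0 by linarith)
      gcongr
    calc c ^ l * (b / a * x * y) ≤ (2 ^ l * b ^ l) * (b / a * x * (D * b ^ (-γ))) := by gcongr
      _ = 2 ^ l * D * ((b ^ l * (b / a) * b ^ (-γ)) * x) := by ring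
      _ ≤ 2 ^ l * D * ((b ^ (-((γ - l) / 2)) * a ^ (-((γ - l) / 2))) * x) := by gcongr
      _ ≤ _ := by
        gcongr
        exact le_add_of_nonneg_right (by positivity)
  · have h1 : c ^ l ≤ 2 ^ l * a ^ l := by
      rw [← Real.mul_rpow (by norm_num) ha0.le]
      exact Real.rpow_le_rpow hc (by linarith) hl
    have h2 : b / a ≤ 1 := (div_le_one ha0).2 h
    have e : (a ^ (-((γ - l) / 2))) ^ 2 = a ^ l * a ^ (-γ) := by
      rw [← Real.rpow_natCast, ← Real.rpow_mul ha0.le, ← Real.rpow_add ha0]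
      congr 1; push_cast; ring
    calc c ^ l * (b / a * x * y) ≤ (2 ^ l * a ^ l) * (1 * (D * a ^ (-γ)) * y) := by gcongr
      _ = 2 ^ l * D * ((a ^ (-((γ - l) / 2))) ^ 2 * y) := by rw [e]; ring
      _ ≤ _ := by
        gcongr
        exact le_add_of_nonneg_left (by positivity)

/-! ### Lattice geometry and lattice sums -/

lemma one_le_znorm {a : ℤ × ℤ} (ha : a ≠ 0) : 1 ≤ znorm a := by
  rw [znorm, Real.one_le_sqrt]
  norm_cast
  have : a.1 ≠ 0 ∨ a.2 ≠ 0 := by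
    by_contra! h
    exact ha (Prod.ext h.1 h.2)
  rcases this with h | h
  · nlinarith [Int.one_le_abs h, sq_abs a.1, sq_nonneg a.2]
  · nlinarith [Int.one_le_abs h, sq_abs a.2, sq_nonneg a.1]

lemma znorm_eq (a : ℤ × ℤ) : znorm a = ‖(⟨a.1, a.2⟩ : ℂ)‖ := by
  rw [znorm, Complex.norm_eq_sqrt_sq_add_sq]

lemma znorm_le_add (k ℓ : ℤ × ℤ) : znorm k ≤ znorm ℓ + znorm (k - ℓ) := by
  rw [znorm_eq, znorm_eq, znorm_eq]
  refine le_trans (le_of_eq ?_) (norm_add_le _ _)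
  congr 1
  apply Complex.ext <;> simp

/-- As `ℓ^⊥ · ℓ = 0`, the numerator `ℓ^⊥ · k` equals `ℓ^⊥ · (k - ℓ)`. -/
lemma abs_zdot_le (k ℓ : ℤ × ℤ) :
    |(zdot (zperp ℓ) k : ℝ)| ≤ znorm ℓ * znorm (k - ℓ) := by
  rw [znorm, znorm, ← Real.sqrt_mul (by positivity)]
  refine Real.abs_le_sqrt ?_
  simp only [zdot, zperp, Prod.fst_sub, Prod.snd_sub]
  push_cast
  nlinarith [sq_nonneg ((ℓ.1 : ℝ) * (k.1 - ℓ.1) + ℓ.2 * (k.2 - ℓ.2))]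

/-- `∑ |m|^{-q}` converges on `ℤ²` for `q > 2`; the term at `m = 0` is `0` by the convention
`0 ^ (-q) = 0`. -/
lemma summable_weight {q : ℝ} (hq : 2 < q) :
    Summable fun m : ℤ × ℤ => (znorm m ^ (-(q / 2))) ^ 2 := by
  have h := (finTwoArrowEquiv ℤ).symm.summable_iff.2 (EisensteinSeries.summable_one_div_norm_rpow hq)
  refine Summable.of_nonneg_of_le (fun m => by positivity) (fun m => ?_) h
  have hz : 0 ≤ znorm m := Real.sqrt_nonneg _
  have e : (znorm m ^ (-(q / 2))) ^ 2 = znorm m ^ (-q) := by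
    rw [← Real.rpow_natCast, ← Real.rpow_mul hz]
    congr 1; push_cast; ring
  rw [e]
  simp only [Function.comp]
  by_cases hm : m = 0
  · subst hm
    have : (-q) ≠ 0 := by linarith
    simp [znorm, Real.zero_rpow this]
    positivity
  · have hn : 0 < ‖(finTwoArrowEquiv ℤ).symm m‖ := by
      rw [norm_pos_iff]
      intro h0
      apply hm
      have := congrArg (finTwoArrowEquiv ℤ) h0
      rw [Equiv.apply_symm_apply] at this
      exact this
    refine Real.rpow_le_rpow_of_nonpos hn ?_ (by linarith)
    rw [pi_norm_le_iff_of_nonneg hz]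
    intro i
    rw [Int.norm_eq_abs]
    refine Real.abs_le_sqrt ?_
    fin_cases i <;> simp <;> positivity

/-! ### Bounds on the nonlinearity -/

lemma norm_Fterm_le {l γ D : ℝ} (hl : 0 ≤ l) (hγ : l + 2 < γ) {ω : Zstar → ℂ} (hD : 0 ≤ D)
    (hω : ∀ j : Zstar, znorm j.1 ^ γ * ‖ω j‖ ≤ D) (k : Zstar) (ℓ : ℤ × ℤ) :
    znorm k.1 ^ l * ‖Fterm ω k ℓ‖ ≤
      2 ^ l * D * (znorm (k.1 - ℓ) ^ (-((γ - l) / 2)) * znorm ℓ ^ (-((γ - l) / 2)) * ‖zext ω ℓ‖ +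
        (znorm ℓ ^ (-((γ - l) / 2))) ^ 2 * ‖zext ω (k.1 - ℓ)‖) := by
  have hz : ∀ m, 0 ≤ znorm m := fun m => Real.sqrt_nonneg _
  have hnn : 0 ≤ 2 ^ l * D * (znorm (k.1 - ℓ) ^ (-((γ - l) / 2)) *
      znorm ℓ ^ (-((γ - l) / 2)) * ‖zext ω ℓ‖ +
        (znorm ℓ ^ (-((γ - l) / 2))) ^ 2 * ‖zext ω (k.1 - ℓ)‖) := by
    have := hz (k.1 - ℓ)
    have := hz ℓ
    positivity
  -- The interactions with `ℓ = 0` or `ℓ = k` vanish, as `zext ω 0 = 0`.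
  by_cases h1 : ℓ = 0
  · have : Fterm ω k ℓ = 0 := by simp [Fterm, h1, zext]
    rw [this]; simpa using hnn
  by_cases h2 : k.1 - ℓ = 0
  · have : Fterm ω k ℓ = 0 := by simp [Fterm, h2, zext]
    rw [this]; simpa using hnn
  have hx : zext ω ℓ = ω ⟨ℓ, h1⟩ := by simp [zext, h1]
  have hy : zext ω (k.1 - ℓ) = ω ⟨k.1 - ℓ, h2⟩ := by simp [zext, h2]
  have ha := one_le_znorm h1
  refine le_trans ?_ (pointwise_bound hl hγ ha (one_le_znorm h2) (hz k.1)
    (znorm_le_add k.1 ℓ) (norm_nonneg _) (norm_nonneg _)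
    (by rw [hx]; exact hω ⟨ℓ, h1⟩) (by rw [hy]; exact hω ⟨k.1 - ℓ, h2⟩))
  have hk : 0 ≤ znorm k.1 ^ l := Real.rpow_nonneg (hz _) _
  refine mul_le_mul_of_nonneg_left ?_ hk
  rw [Fterm, norm_mul, norm_mul, Complex.norm_real, Real.norm_eq_abs, abs_div,
    abs_of_nonneg (sq_nonneg (znorm ℓ))]
  have hdiv : |(zdot (zperp ℓ) k.1 : ℝ)| / znorm ℓ ^ 2 ≤ znorm (k.1 - ℓ) / znorm ℓ := by
    rw [div_le_div_iff₀ (by positivity) (by positivity)]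
    nlinarith [mul_le_mul_of_nonneg_right (abs_zdot_le k.1 ℓ) (hz ℓ)]
  gcongr

lemma tsum_zext (ω : Zstar → ℂ) : ∑' m, ‖zext ω m‖ₑ ^ 2 = ∑' j : Zstar, ‖ω j‖ₑ ^ 2 := by
  have hs : Function.support (fun m => ‖zext ω m‖ₑ ^ 2) ⊆ {m : ℤ × ℤ | m ≠ 0} := by
    intro m hm h0
    apply hm
    simp [zext, h0]
  rw [← tsum_subtype_eq_of_support_subset hs]
  refine tsum_congr fun j => ?_
  have : (j : ℤ × ℤ) ≠ 0 := j.2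
  simp [zext, this]

/-- The bound is in `[0, ∞]`, so it needs no prior knowledge of the convergence of the series
defining `F_k(ω)`. -/
lemma enorm_Fns_le {l γ D : ℝ} (hl : 0 ≤ l) (hγ : l + 2 < γ) {ω : Zstar → ℂ} (hD : 0 ≤ D)
    (hω : ∀ j : Zstar, znorm j.1 ^ γ * ‖ω j‖ ≤ D) (k : Zstar)
    {u : ℤ × ℤ → ℝ≥0∞} (hu : ∀ m, u m = ENNReal.ofReal (znorm m ^ (-((γ - l) / 2)))) :
    ENNReal.ofReal (znorm k.1 ^ l * ‖Fns ω k‖) ≤ ENNReal.ofReal (2 * (2 ^ l * D)) *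
      ∑' ℓ : ℤ × ℤ, (u (k.1 - ℓ) * u ℓ * ‖zext ω ℓ‖ₑ + u ℓ ^ 2 * ‖zext ω (k.1 - ℓ)‖ₑ) := by
  have hz : ∀ m, 0 ≤ znorm m := fun m => Real.sqrt_nonneg _
  have hk : 0 ≤ znorm k.1 ^ l := Real.rpow_nonneg (hz _) _
  have hn : ‖Fns ω k‖ = 2 * ‖∑' ℓ, Fterm ω k ℓ‖ := by simp [Fns]
  rw [hn, mul_left_comm, ENNReal.ofReal_mul zero_le_two, ENNReal.ofReal_mul hk, ofReal_norm,
    ENNReal.ofReal_mul zero_le_two, mul_assoc]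
  refine mul_le_mul_right ?_ _
  refine (mul_le_mul_right (enorm_tsum_le_tsum_enorm (f := Fterm ω k)) _).trans ?_
  rw [← ENNReal.tsum_mul_left, ← ENNReal.tsum_mul_left]
  refine ENNReal.tsum_le_tsum fun ℓ => ?_
  have h := ENNReal.ofReal_le_ofReal (norm_Fterm_le hl hγ hD hω k ℓ)
  have p1 : 0 ≤ znorm (k.1 - ℓ) ^ (-((γ - l) / 2)) := Real.rpow_nonneg (hz _) _
  have p2 : 0 ≤ znorm ℓ ^ (-((γ - l) / 2)) := Real.rpow_nonneg (hz _) _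
  have p3 : 0 ≤ 2 ^ l * D := by positivity
  rw [ENNReal.ofReal_mul hk, ofReal_norm, ENNReal.ofReal_mul p3,
    ENNReal.ofReal_add (by positivity) (by positivity), ENNReal.ofReal_mul (mul_nonneg p1 p2),
    ENNReal.ofReal_mul p1, ENNReal.ofReal_mul (pow_nonneg p2 2), ENNReal.ofReal_pow p2,
    ofReal_norm, ofReal_norm, ← hu, ← hu] at h
  exact h

lemma summable_and_tsum_le {ι : Type*} {f : ι → ℝ} (hf : ∀ i, 0 ≤ f i) {B : ℝ} (hB : 0 ≤ B)
    (h : ∑' i, ENNReal.ofReal (f i) ≤ ENNReal.ofReal B) : Summable f ∧ ∑' i, f i ≤ B := by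
  have hs : Summable f := by
    have := ENNReal.summable_toReal (ne_top_of_le_ne_top ENNReal.ofReal_ne_top h)
    simpa [ENNReal.toReal_ofReal, hf] using this
  refine ⟨hs, ?_⟩
  rwa [← ENNReal.ofReal_tsum_of_nonneg hf hs, ENNReal.ofReal_le_ofReal_iff hB] at h

/-- for `l ≥ 0`, `γ > l + 2`, `K₁ > 0` there is `C > 0` such that for all
`ω` with `|ω|_{∞,γ} ≤ D`, `‖ω‖ ≤ S` and all `σ` with `|σ_k| ≥ K₁/|k|^l`, the series
`∑_k |F_k(ω)|²/|σ_k|²` converges and is at most `C S² D²`. -/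
theorem stmt13 :
    ∀ l γ K₁ : ℝ, 0 ≤ l → l + 2 < γ → 0 < K₁ →
    ∃ C : ℝ, 0 < C ∧
      ∀ (D S : ℝ), 0 < D → 0 < S →
      ∀ ω : Zstar → ℂ,
        (∀ j : Zstar, znorm j.1 ^ γ * ‖ω j‖ ≤ D) →
        (Summable fun j : Zstar => ‖ω j‖ ^ 2) →
        (∑' j : Zstar, ‖ω j‖ ^ 2) ≤ S ^ 2 →
      ∀ σ : Zstar → ℂ,
        (∀ k : Zstar, K₁ / znorm k.1 ^ l ≤ ‖σ k‖) →
        (Summable fun k : Zstar => ‖Fns ω k‖ ^ 2 / ‖σ k‖ ^ 2) ∧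
        (∑' k : Zstar, ‖Fns ω k‖ ^ 2 / ‖σ k‖ ^ 2) ≤ C * S ^ 2 * D ^ 2 := by
  intro l γ K₁ hl hγ hK
  set W : ℝ := ∑' m : ℤ × ℤ, (znorm m ^ (-((γ - l) / 2))) ^ 2 with hW
  have hWs := summable_weight (q := γ - l) (by linarith)
  have hW0 : 0 ≤ W := tsum_nonneg fun m => sq_nonneg _
  -- The summand `1` only makes the constant visibly positive.
  refine ⟨(2 * 2 ^ l / K₁) ^ 2 * (4 * W ^ 2) + 1, by positivity, ?_⟩
  intro D S hD hS ω hω hωs hωS σ hσ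
  have hz : ∀ m, 0 ≤ znorm m := fun m => Real.sqrt_nonneg _
  set u : ℤ × ℤ → ℝ≥0∞ := fun m => ENNReal.ofReal (znorm m ^ (-((γ - l) / 2))) with hu
  have hu2 : ∑' m, u m ^ 2 = ENNReal.ofReal W := by
    rw [hW, ENNReal.ofReal_tsum_of_nonneg (fun m => sq_nonneg _) hWs]
    exact tsum_congr fun m => (ENNReal.ofReal_pow (Real.rpow_nonneg (hz m) _) 2).symm
  have hv2 : ∑' m, ‖zext ω m‖ₑ ^ 2 ≤ ENNReal.ofReal (S ^ 2) := by
    rw [tsum_zext]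
    refine le_trans (le_of_eq ?_) (ENNReal.ofReal_le_ofReal hωS)
    rw [ENNReal.ofReal_tsum_of_nonneg (fun m => sq_nonneg _) hωs]
    refine tsum_congr fun m => ?_
    rw [ENNReal.ofReal_pow (norm_nonneg _), ofReal_norm]
  have hterm : ∀ k : Zstar, ENNReal.ofReal (‖Fns ω k‖ ^ 2 / ‖σ k‖ ^ 2) ≤
      ENNReal.ofReal ((2 * 2 ^ l / K₁) ^ 2 * D ^ 2) * (∑' ℓ : ℤ × ℤ,
        (u (k.1 - ℓ) * u ℓ * ‖zext ω ℓ‖ₑ + u ℓ ^ 2 * ‖zext ω (k.1 - ℓ)‖ₑ)) ^ 2 := by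
    intro k
    have hk : 0 < znorm k.1 := lt_of_lt_of_le one_pos (one_le_znorm k.2)
    have hkl : 0 < znorm k.1 ^ l := Real.rpow_pos_of_pos hk l
    have h1 : ‖Fns ω k‖ / ‖σ k‖ ≤ K₁⁻¹ * (znorm k.1 ^ l * ‖Fns ω k‖) := by
      calc ‖Fns ω k‖ / ‖σ k‖ ≤ ‖Fns ω k‖ / (K₁ / znorm k.1 ^ l) := by
            gcongr
            exact hσ k
        _ = _ := by field_simp
    have h2 := ENNReal.ofReal_le_ofReal h1
    rw [ENNReal.ofReal_mul (inv_nonneg.2 hK.le)] at h2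
    have h3 := h2.trans
      (mul_le_mul_right (enorm_Fns_le hl hγ hD.le hω k (u := u) fun _ => rfl) _)
    rw [← mul_assoc, ← ENNReal.ofReal_mul (inv_nonneg.2 hK.le)] at h3
    have h4 := pow_le_pow_left' h3 2
    rw [mul_pow, ← ENNReal.ofReal_pow (by positivity), ← ENNReal.ofReal_pow (by positivity),
      div_pow] at h4
    refine h4.trans (le_of_eq ?_)
    congr 2
    ring
  refine summable_and_tsum_le (fun k => by positivity) (by positivity) ?_
  calc ∑' k : Zstar, ENNReal.ofReal (‖Fns ω k‖ ^ 2 / ‖σ k‖ ^ 2)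
      ≤ ∑' k : Zstar, ENNReal.ofReal ((2 * 2 ^ l / K₁) ^ 2 * D ^ 2) * (∑' ℓ : ℤ × ℤ,
        (u (k.1 - ℓ) * u ℓ * ‖zext ω ℓ‖ₑ + u ℓ ^ 2 * ‖zext ω (k.1 - ℓ)‖ₑ)) ^ 2 :=
        ENNReal.tsum_le_tsum hterm
    _ ≤ ENNReal.ofReal ((2 * 2 ^ l / K₁) ^ 2 * D ^ 2) * ∑' k : ℤ × ℤ, (∑' ℓ : ℤ × ℤ,
        (u (k - ℓ) * u ℓ * ‖zext ω ℓ‖ₑ + u ℓ ^ 2 * ‖zext ω (k - ℓ)‖ₑ)) ^ 2 := by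
        rw [ENNReal.tsum_mul_left]
        gcongr
        exact ENNReal.tsum_comp_le_tsum_of_injective Subtype.val_injective (fun k : ℤ × ℤ =>
          (∑' ℓ : ℤ × ℤ, (u (k - ℓ) * u ℓ * ‖zext ω ℓ‖ₑ + u ℓ ^ 2 * ‖zext ω (k - ℓ)‖ₑ)) ^ 2)
    _ ≤ ENNReal.ofReal ((2 * 2 ^ l / K₁) ^ 2 * D ^ 2) *
        (4 * ENNReal.ofReal W ^ 2 * ENNReal.ofReal (S ^ 2)) := by
        gcongr
        refine (bilinear_bound u fun m => ‖zext ω m‖ₑ).trans ?_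
        rw [hu2]
        gcongr
    _ = ENNReal.ofReal ((2 * 2 ^ l / K₁) ^ 2 * D ^ 2 * (4 * W ^ 2 * S ^ 2)) := by
        rw [ENNReal.ofReal_mul (p := (2 * 2 ^ l / K₁) ^ 2 * D ^ 2) (by positivity),
          ENNReal.ofReal_mul (p := 4 * W ^ 2) (by positivity),
          ENNReal.ofReal_mul (p := 4) (by positivity), ENNReal.ofReal_pow hW0]
        simp
    _ ≤ _ := by
        refine ENNReal.ofReal_le_ofReal ?_
        nlinarith [mul_nonneg (sq_nonneg S) (sq_nonneg D)]
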